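/- arXiv:1410.0308 — 3 statements merged into one kernel-verified Lean document; each statement's English description precedes it below -/
import Mathlib

section
/- Let c₁, c₂ ≥ 2 be natural numbers and let u'₊, u'₀, u'₋, u''₊, u''₀, u''₋ be integers. With P and Q the truncated Kauffman polynomials in ℤ[a,a⁻¹][z] defined by P = u'₊·a²·z^(c₁−2) + a·z^(c₁−1) + u'₀·z^(c₁−2) + a⁻¹·z^(c₁−1) + u'₋·a⁻²·z^(c₁−2) and Q = u''₊·a²·z^(c₂−2) + a·z^(c₂−1) + u''₀·z^(c₂−2) + a⁻¹·z^(c₂−1) + u''₋·a⁻²·z^(c₂−2), the degree of P·Q in z is exactly c₁ + c₂ − 2, with leading coefficient a² + 2 + a⁻² ∈ ℤ[a,a⁻¹]. (This is the paper's claim that if a connected sum of two reduced alternating diagrams has c = c₁ + c₂ crossings, then the highest z-degree of its Λ̃-invariant is c − 2, one lower than the z-degree c − 1 attained by prime alternating diagrams.) -/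
open Polynomial LaurentPolynomial

theorem helper_deg {R : Type*} [CommRing R] (L M : R) (hL : L ≠ 0) (n : ℕ) (P : Polynomial R)
    (hP : P = Polynomial.C L * X ^ (n + 1) + Polynomial.C M * X ^ n) :
    P.degree = ((n + 1 : ℕ) : WithBot ℕ) ∧ P.leadingCoeff = L := by
  have hlt : (Polynomial.C M * X ^ n).degree < (Polynomial.C L * X ^ (n + 1)).degree := by
    rw [Polynomial.degree_C_mul_X_pow _ hL]
    refine lt_of_le_of_lt (Polynomial.degree_C_mul_X_pow_le _ _) ?_
    exact_mod_cast Nat.lt_succ_self n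
  constructor
  · rw [hP, Polynomial.degree_add_eq_left_of_degree_lt hlt, Polynomial.degree_C_mul_X_pow _ hL]
  · rw [hP, Polynomial.leadingCoeff_add_of_degree_lt' hlt, Polynomial.leadingCoeff_C_mul_X_pow]

theorem helper_sq : ((T 1 + T (-1)) * (T 1 + T (-1)) : LaurentPolynomial ℤ) = T 2 + 2 + T (-2) := by
  have h1 : (T 1 * T (-1) : LaurentPolynomial ℤ) = 1 := by
    rw [← LaurentPolynomial.T_add]; simp
  have h2 : (T 2 : LaurentPolynomial ℤ) = T 1 * T 1 := by
    rw [← LaurentPolynomial.T_add]; norm_num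
  have h3 : (T (-2) : LaurentPolynomial ℤ) = T (-1) * T (-1) := by
    rw [← LaurentPolynomial.T_add]; norm_num
  rw [h2, h3]
  linear_combination 2 * h1

theorem helper_ne : (T 2 + 2 + T (-2) : LaurentPolynomial ℤ) ≠ 0 := by
  intro h
  have := congrArg (LaurentPolynomial.eval₂ (RingHom.id ℤ) (1 : ℤˣ)) h
  rw [← one_add_one_eq_two (R := LaurentPolynomial ℤ)] at this
  simp only [map_add, map_one, map_zero, LaurentPolynomial.eval₂_T] at this
  norm_num at this

/-- The Λ̃-invariant of a connected sum of two reduced alternating diagrams with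
`c₁` and `c₂` crossings has `z`-degree exactly `c₁ + c₂ - 2`, with leading
coefficient `a² + 2 + a⁻²`. -/
theorem connectedSum_degree (c₁ c₂ : ℕ) (hc₁ : 2 ≤ c₁) (hc₂ : 2 ≤ c₂)
    (u'p u'0 u'm u''p u''0 u''m : ℤ)
    (P Q : Polynomial (LaurentPolynomial ℤ))
    (hP : P = Polynomial.C ((u'p : LaurentPolynomial ℤ) * T 2) * X ^ (c₁ - 2)
        + Polynomial.C (T 1) * X ^ (c₁ - 1)
        + Polynomial.C ((u'0 : LaurentPolynomial ℤ)) * X ^ (c₁ - 2)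
        + Polynomial.C (T (-1)) * X ^ (c₁ - 1)
        + Polynomial.C ((u'm : LaurentPolynomial ℤ) * T (-2)) * X ^ (c₁ - 2))
    (hQ : Q = Polynomial.C ((u''p : LaurentPolynomial ℤ) * T 2) * X ^ (c₂ - 2)
        + Polynomial.C (T 1) * X ^ (c₂ - 1)
        + Polynomial.C ((u''0 : LaurentPolynomial ℤ)) * X ^ (c₂ - 2)
        + Polynomial.C (T (-1)) * X ^ (c₂ - 1)
        + Polynomial.C ((u''m : LaurentPolynomial ℤ) * T (-2)) * X ^ (c₂ - 2)) :
    (P * Q).degree = ((c₁ + c₂ - 2 : ℕ) : WithBot ℕ) ∧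
    (P * Q).leadingCoeff = T 2 + 2 + T (-2) := by
  obtain ⟨m, rfl⟩ := Nat.exists_eq_add_of_le' hc₁
  obtain ⟨n, rfl⟩ := Nat.exists_eq_add_of_le' hc₂
  have hne : (T 1 + T (-1) : LaurentPolynomial ℤ) ≠ 0 := by
    intro h
    apply helper_ne
    rw [← helper_sq, h, zero_mul]
  obtain ⟨dP, lP⟩ := helper_deg (T 1 + T (-1) : LaurentPolynomial ℤ)
    ((u'p : LaurentPolynomial ℤ) * T 2 + (u'0 : LaurentPolynomial ℤ)
      + (u'm : LaurentPolynomial ℤ) * T (-2)) hne m P (by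
      rw [hP, show m + 2 - 2 = m by omega, show m + 2 - 1 = m + 1 by omega]
      simp only [Polynomial.C_add]
      ring)
  obtain ⟨dQ, lQ⟩ := helper_deg (T 1 + T (-1) : LaurentPolynomial ℤ)
    ((u''p : LaurentPolynomial ℤ) * T 2 + (u''0 : LaurentPolynomial ℤ)
      + (u''m : LaurentPolynomial ℤ) * T (-2)) hne n Q (by
      rw [hQ, show n + 2 - 2 = n by omega, show n + 2 - 1 = n + 1 by omega]
      simp only [Polynomial.C_add]
      ring)
  have hl : P.leadingCoeff * Q.leadingCoeff ≠ 0 := by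
    rw [lP, lQ, helper_sq]
    exact helper_ne
  constructor
  · rw [Polynomial.degree_mul' hl, dP, dQ, ← Nat.cast_add]
    congr 1
    omega
  · rw [Polynomial.leadingCoeff_mul' hl, lP, lQ, helper_sq]
end

section
/- Let n ≥ 1 be an odd natural number and c ≥ 3 a natural number. Then the truncated Kauffman polynomial Λ̃(n,c) ∈ ℤ[a,a⁻¹][z] is not fixed by the involution a ↔ a⁻¹; that is, if inv : ℤ[a,a⁻¹] → ℤ[a,a⁻¹] is the ring automorphism sending a to a⁻¹ (Mathlib's LaurentPolynomial.invert) and we apply it coefficientwise to polynomials in z via Polynomial.map, then Polynomial.map inv (Λ̃(n,c)) ≠ Λ̃(n,c). (This is the content of the paper's Corollary: for a rational tangle T in standard format with an odd number of twist sites, u₊ = u₋ + 1, so Λ̃ lacks the symmetry under a ↔ a⁻¹ required of an amphicheiral knot or link; hence N(T) cannot be amphicheiral.) -/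
open Polynomial LaurentPolynomial

/-- The truncated Kauffman polynomial Λ̃(n,c) in ℤ[a,a⁻¹][z], where `a = T 1` is the
Laurent variable and `z = X` is the polynomial variable. -/
noncomputable def LamTilde (n c : ℕ) : Polynomial (LaurentPolynomial ℤ) :=
    Polynomial.C ((((n + 1) / 2 : ℕ) : LaurentPolynomial ℤ) * T 2) * X ^ (c - 2)
  + Polynomial.C (T 1) * X ^ (c - 1)
  + Polynomial.C ((n : ℕ) : LaurentPolynomial ℤ) * X ^ (c - 2)
  + Polynomial.C (T (-1)) * X ^ (c - 1)
  + Polynomial.C (((n / 2 : ℕ) : LaurentPolynomial ℤ) * T (-2)) * X ^ (c - 2)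

/-- For an odd number `n` of twist sites, Λ̃(n,c) is not symmetric under `a ↔ a⁻¹`;
hence the corresponding rational knot or link cannot be amphicheiral. -/
theorem lamTilde_odd_not_amphicheiral (n c : ℕ) (hn : 1 ≤ n) (hodd : Odd n) (hc : 3 ≤ c) :
    Polynomial.map (LaurentPolynomial.invert (R := ℤ)).toRingEquiv.toRingHom (LamTilde n c)
      ≠ LamTilde n c := by
  obtain ⟨k, rfl⟩ := hodd
  obtain ⟨d, rfl⟩ : ∃ d, c = d + 3 := ⟨c - 3, by omega⟩
  intro h
  have e1 : (2 * k + 1 + 1) / 2 = k + 1 := by omega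
  have e2 : (2 * k + 1) / 2 = k := by omega
  have e3 : d + 3 - 2 = d + 1 := by omega
  have e4 : d + 3 - 1 = d + 2 := by omega
  have h1 := congrArg (fun p => Polynomial.coeff p (d + 1)) h
  have i2 : (LaurentPolynomial.invert (R := ℤ)).toRingEquiv.toRingHom (T 2) = T (-2) :=
    LaurentPolynomial.invert_T 2
  have i3 : (LaurentPolynomial.invert (R := ℤ)).toRingEquiv.toRingHom (T (-2)) = T 2 :=
    LaurentPolynomial.invert_T (-2)
  have hz : ∀ x : LaurentPolynomial ℤ,
      (Polynomial.C x * Polynomial.X ^ (d + 2)).coeff (d + 1) = 0 := by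
    intro x
    rw [Polynomial.coeff_C_mul_X_pow, if_neg (by omega)]
  have hs : ∀ x : LaurentPolynomial ℤ,
      (Polynomial.C x * Polynomial.X ^ (d + 1)).coeff (d + 1) = x := by
    intro x
    rw [Polynomial.coeff_C_mul_X_pow, if_pos rfl]
  simp only [LamTilde, e1, e2, e3, e4, Polynomial.coeff_map, Polynomial.coeff_add, hz, hs] at h1
  simp only [map_add, map_mul, map_natCast, i2, i3, map_zero] at h1
  push_cast at h1
  have h2 : (T (-2) : LaurentPolynomial ℤ) = T 2 := by linear_combination h1
  have h3 := congrArg LaurentPolynomial.degree h2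
  rw [LaurentPolynomial.degree_T, LaurentPolynomial.degree_T] at h3
  exact absurd (WithBot.coe_injective h3) (by norm_num)
end

section
/- Define a sequence M : ℕ → ℤ[a,a⁻¹][z] by M(2) = Λ̃(2,4) (the figure-eight datum), M(3) = Λ̃(3,5) (the datum for N(212)), and for n ≥ 2 the recursion M(n+2) = z²·M(n) + (a² + 2 + a⁻²)·z^(n+2). Then M(n) = Λ̃(n, n+2) for every n ≥ 2; that is, M(n) = ⌈n/2⌉·a²·z^n + a·z^(n+1) + n·z^n + a⁻¹·z^(n+1) + ⌊n/2⌋·a⁻²·z^n. (This encodes the main Theorem of the paper for minimal rational tangles: the minimal tangle 21^(n−2)2 in standard format has n twist sites and n+2 crossings; smoothing its last singleton twist site yields via the truncated skein relation the stated recursion, whose solution shows that a rational knot or link in standard format with n twist sites and c crossings has Λ̃ = ⌈n/2⌉a²z^(c−2) + az^(c−1) + nz^(c−2) + a⁻¹z^(c−1) + ⌊n/2⌋a⁻²z^(c−2).) -/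
open Polynomial LaurentPolynomial

/-- The main theorem for minimal rational tangles: any sequence `M` satisfying the
figure-eight and `N(212)` initial data together with the skein recursion
`M(n+2) = z²·M(n) + (a² + 2 + a⁻²)·z^(n+2)` coincides with `Λ̃(n, n+2)` for all `n ≥ 2`. -/
theorem minimal_tangle_main (M : ℕ → Polynomial (LaurentPolynomial ℤ))
    (h2 : M 2 = LamTilde 2 4) (h3 : M 3 = LamTilde 3 5)
    (hrec : ∀ n, 2 ≤ n →
      M (n + 2) = X ^ 2 * M n + Polynomial.C (T 2 + 2 + T (-2) : LaurentPolynomial ℤ) * X ^ (n + 2)) :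
    ∀ n, 2 ≤ n → M n = LamTilde n (n + 2) := by
  have key : ∀ n, 2 ≤ n → M n = LamTilde n (n + 2) ∧ M (n + 1) = LamTilde (n + 1) (n + 1 + 2) := by
    intro n hn
    induction n, hn using Nat.le_induction with
    | base => exact ⟨h2, h3⟩
    | succ n hn ih =>
      refine ⟨ih.2, ?_⟩
      have h := hrec n hn
      rw [ih.1] at h
      rw [show n + 1 + 1 = n + 2 from rfl, h]
      unfold LamTilde
      rw [show (n + 2 + 1) / 2 = (n + 1) / 2 + 1 by omega,
        show (n + 2) / 2 = n / 2 + 1 by omega,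
        show n + 2 + 2 - 2 = n + 2 by omega, show n + 2 + 2 - 1 = n + 3 by omega,
        show n + 2 - 2 = n by omega, show n + 2 - 1 = n + 1 by omega]
      simp only [Nat.cast_add, Nat.cast_one, Nat.cast_ofNat, map_add, map_mul, map_one]
      ring
  exact fun n hn => (key n hn).1
end
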